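/- If μ is a C¹-approximate flow on a Banach space U, i.e. a family (μ_{ts})_{0≤s≤t≤T} of C² maps from U to itself, continuous in (s,t) in uniform topology, with ‖μ_{ts} − Id‖_{C²} = o(1) as t−s → 0, and satisfying ‖μ_{tu}∘μ_{us} − μ_{ts}‖_{C¹} ≤ c₁|t−s|^a for some constants c₁ > 0 and a > 1, then there exists a unique flow (φ_{ts})_{0≤s≤t≤T} on U (φ_{ss}=Id, φ_{tu}∘φ_{us}=φ_{ts}) such that ‖φ_{ts} − μ_{ts}‖_∞ ≤ c|t−s|^a for some constant c and all s ≤ t with t−s ≤ δ, for some δ > 0. -/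

import Mathlib

/-!
Composing `μ` along the points of a partition gives an exact flow at those points; the flow `φ` is
the limit as the mesh tends to `0`. Everything rests on a bound independent of the partition:
over an interval of length `h ≤ δ`, the composition is within `C h^a` of `μ` in `C¹`
(`exists_C1Near_gridComp`). It is proved by cutting the partition at the midpoint of the interval:
errors add up under composition up to a factor close to `1` (`C1Near.comp`, which uses that second
derivatives are small), and two halves contribute `2 * 2^(-a) < 1` times the allowed error, which
leaves room for the defect `c₁ h^a`. In particular the compositions are Lipschitz uniformly in the
partition, also over long intervals (`exists_gridBounds`).

With a uniform Lipschitz constant `L`, local errors can be summed: replacing one composition by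
another step by step, on steps of length at most `η`, costs `O(η^a)` per step and so `O(η^(a-1))`
in total. This gives the convergence of the compositions along uniform grids
(`GridBounds.refinement`, `GridBounds.gridFlow_mul`), and the same telescoping, between `φ` and another
flow `ψ` close to `μ`, gives uniqueness (`IsFlow.eq_of_close`), where only `φ` need be Lipschitz.
-/

set_option linter.unusedSectionVars false

noncomputable section

open Set

variable {U : Type*} [NormedAddCommGroup U] [NormedSpace ℝ U] [CompleteSpace U]

/-- A flow on `U` over the time interval `[0,T]`: `φ t s` is the map from time `s` to time `t`. -/
def IsFlow (T : ℝ) (φ : ℝ → ℝ → U → U) : Prop :=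
  (∀ s, 0 ≤ s → s ≤ T → ∀ x, φ s s x = x) ∧
  (∀ s u t, 0 ≤ s → s ≤ u → u ≤ t → t ≤ T → ∀ x, φ t u (φ u s x) = φ t s x)

/-- A `C¹`-approximate flow on `U` with constants `c₁` and `a > 1`:  a family of `C²` maps
`μ t s : U → U`, continuous in `(s,t)` in the uniform topology, with
`‖μ_{ts} - Id‖_{C²} = o_{t-s}(1)` and `‖μ_{tu} ∘ μ_{us} - μ_{ts}‖_{C¹} ≤ c₁ |t-s|^a`. -/
structure IsC1ApproxFlow (T c₁ a : ℝ) (μ : ℝ → ℝ → U → U) : Prop where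
  smooth : ∀ s t, 0 ≤ s → s ≤ t → t ≤ T → ContDiff ℝ 2 (μ t s)
  cont : ∀ s t, 0 ≤ s → s ≤ t → t ≤ T → ∀ ε > (0:ℝ), ∃ η > (0:ℝ), ∀ s' t',
      0 ≤ s' → s' ≤ t' → t' ≤ T → |s' - s| ≤ η → |t' - t| ≤ η →
      ∀ x, ‖μ t' s' x - μ t s x‖ ≤ ε
  near_id : ∀ ε > (0:ℝ), ∃ η > (0:ℝ), ∀ s t, 0 ≤ s → s ≤ t → t ≤ T → t - s ≤ η → ∀ x,
      ‖μ t s x - x‖ ≤ ε ∧ ‖fderiv ℝ (μ t s) x - ContinuousLinearMap.id ℝ U‖ ≤ ε ∧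
      ‖iteratedFDeriv ℝ 2 (μ t s) x‖ ≤ ε
  c₁_pos : 0 < c₁
  a_gt_one : 1 < a
  approx : ∀ s u t, 0 ≤ s → s ≤ u → u ≤ t → t ≤ T → ∀ x,
      ‖μ t u (μ u s x) - μ t s x‖ ≤ c₁ * (t - s) ^ a ∧
      ‖fderiv ℝ (fun z => μ t u (μ u s z)) x - fderiv ℝ (μ t s) x‖ ≤ c₁ * (t - s) ^ a

/-- `φ` is at uniform distance at most `c |t-s|^a` from `μ`, for `t - s ≤ δ`. -/
def Close (T a c δ : ℝ) (φ μ : ℝ → ℝ → U → U) : Prop :=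
  ∀ s t, 0 ≤ s → s ≤ t → t ≤ T → t - s ≤ δ →
    ∀ x, ‖φ t s x - μ t s x‖ ≤ c * (t - s) ^ a

/-- Composition of the maps `μ` along the partition `s = σ 0 < σ 1 < ⋯ < σ n = t`. -/
def compAlong (μ : ℝ → ℝ → U → U) (σ : ℕ → ℝ) : ℕ → U → U
  | 0 => fun x => x
  | n + 1 => fun x => μ (σ (n + 1)) (σ n) (compAlong μ σ n x)

/-! ### Compositions along a partition -/

/-- `gridComp μ σ i j` is the composition of the maps `μ (σ (k+1)) (σ k)` for `i ≤ k < j`, that is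
the composition of `μ` along the points `σ i, σ (i+1), …, σ j`; it is the identity if `j ≤ i`. -/
def gridComp (μ : ℝ → ℝ → U → U) (σ : ℕ → ℝ) (i : ℕ) : ℕ → U → U
  | 0 => fun x => x
  | j + 1 => if i ≤ j then fun x => μ (σ (j + 1)) (σ j) (gridComp μ σ i j x) else fun x => x

lemma gridComp_self (μ : ℝ → ℝ → U → U) (σ : ℕ → ℝ) (i : ℕ) (x : U) :
    gridComp μ σ i i x = x := by
  cases i <;> simp [gridComp]

lemma gridComp_succ (μ : ℝ → ℝ → U → U) (σ : ℕ → ℝ) {i j : ℕ} (h : i ≤ j) (x : U) :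
    gridComp μ σ i (j + 1) x = μ (σ (j + 1)) (σ j) (gridComp μ σ i j x) := by
  simp [gridComp, h]

lemma gridComp_one (μ : ℝ → ℝ → U → U) (σ : ℕ → ℝ) (i : ℕ) (x : U) :
    gridComp μ σ i (i + 1) x = μ (σ (i + 1)) (σ i) x := by
  rw [gridComp_succ μ σ le_rfl, gridComp_self]

lemma gridComp_trans (μ : ℝ → ℝ → U → U) (σ : ℕ → ℝ) {i j k : ℕ} (h : i ≤ j) (h' : j ≤ k) (x : U) :
    gridComp μ σ j k (gridComp μ σ i j x) = gridComp μ σ i k x := by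
  induction k, h' using Nat.le_induction with
  | base => rw [gridComp_self]
  | succ k hk ih => rw [gridComp_succ μ σ hk, gridComp_succ μ σ (h.trans hk), ih]

lemma exists_step_around (σ : ℕ → ℝ) (m : ℝ) {i j : ℕ} (hij : i < j) (hi : σ i ≤ m)
    (hj : m ≤ σ j) : ∃ k, i ≤ k ∧ k < j ∧ σ k ≤ m ∧ m ≤ σ (k + 1) := by
  induction j, hij using Nat.le_induction with
  | base => exact ⟨i, le_rfl, Nat.lt_succ_self i, hi, hj⟩
  | succ j hj' ih =>
    rcases le_total m (σ j) with h | h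
    · obtain ⟨k, h1, h2, h3⟩ := ih h
      exact ⟨k, h1, h2.trans (Nat.lt_succ_self j), h3⟩
    · exact ⟨j, (Nat.lt_of_succ_le hj').le, Nat.lt_succ_self j, h, hj⟩

/-! ### Composing maps that are `C¹`-close to the approximate flow -/

lemma norm_image_sub_le_of_fderiv {V W : Type*} [NormedAddCommGroup V] [NormedSpace ℝ V]
    [NormedAddCommGroup W] [NormedSpace ℝ W] {f : V → W} {K : ℝ}
    (hf : Differentiable ℝ f) (hb : ∀ x, ‖fderiv ℝ f x‖ ≤ K) (x y : V) :
    ‖f x - f y‖ ≤ K * ‖x - y‖ :=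
  convex_univ.norm_image_sub_le_of_norm_fderiv_le (𝕜 := ℝ) (fun z _ => hf z) (fun z _ => hb z)
    (mem_univ y) (mem_univ x)

/-- `f` is differentiable and lies within `e` of `g` in the `C¹` sense: both the values and the
derivatives differ by at most `e`, uniformly. -/
structure C1Near (f g : U → U) (e : ℝ) : Prop where
  diff : Differentiable ℝ f
  val : ∀ x, ‖f x - g x‖ ≤ e
  der : ∀ x, ‖fderiv ℝ f x - fderiv ℝ g x‖ ≤ e

lemma C1Near.mono {f g : U → U} {e e' : ℝ} (h : C1Near f g e) (he : e ≤ e') : C1Near f g e' :=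
  ⟨h.diff, fun x => (h.val x).trans he, fun x => (h.der x).trans he⟩

/-- Errors add up to a factor close to `1` under composition. Control of the second derivative of
the outer map `g₀` is what allows the derivatives of `g₀` at the two points `f x` and `f₀ x` to be
compared. -/
lemma C1Near.comp {f f₀ g g₀ h₀ : U → U} {e₁ e₂ e₃ ε : ℝ} (hε : ε ≤ 1 / 4)
    (he₁ : 0 ≤ e₁) (he₂ : 0 ≤ e₂) (he₁' : e₁ ≤ ε)
    (hf : C1Near f f₀ e₁) (hg : C1Near g g₀ e₂)
    (hf₀ : Differentiable ℝ f₀) (hg₀ : ContDiff ℝ 2 g₀)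
    (hf₀' : ∀ x, ‖fderiv ℝ f₀ x‖ ≤ 1 + ε) (hg₀' : ∀ x, ‖fderiv ℝ g₀ x‖ ≤ 1 + ε)
    (hg₀'' : ∀ x, ‖iteratedFDeriv ℝ 2 g₀ x‖ ≤ ε)
    (hv : ∀ x, ‖g₀ (f₀ x) - h₀ x‖ ≤ e₃)
    (hd : ∀ x, ‖fderiv ℝ (fun z => g₀ (f₀ z)) x - fderiv ℝ h₀ x‖ ≤ e₃) :
    C1Near (fun x => g (f x)) h₀ ((1 + 4 * ε) * (e₁ + e₂) + e₃) := by
  have hε0 : 0 ≤ ε := he₁.trans he₁'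
  have hg₀d : Differentiable ℝ g₀ := hg₀.differentiable (by norm_num)
  refine ⟨hg.diff.comp hf.diff, fun x => ?_, fun x => ?_⟩
  · have h1 := hg.val (f x)
    have h2 := norm_image_sub_le_of_fderiv hg₀d hg₀' (f x) (f₀ x)
    have h3 := mul_le_mul_of_nonneg_left (hf.val x) (by linarith : (0:ℝ) ≤ 1 + ε)
    have h4 := hv x
    have h5 : g (f x) - h₀ x = (g (f x) - g₀ (f x)) + (g₀ (f x) - g₀ (f₀ x)) + (g₀ (f₀ x) - h₀ x) := by
      abel
    have h6 := norm_add₃_le (a := g (f x) - g₀ (f x)) (b := g₀ (f x) - g₀ (f₀ x))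
      (c := g₀ (f₀ x) - h₀ x)
    have h7 := mul_nonneg hε0 he₁
    have h8 := mul_nonneg hε0 he₂
    rw [h5]
    linarith
  · have hfx : ‖fderiv ℝ f x‖ ≤ 1 + 2 * ε := by
      have := norm_le_norm_add_norm_sub' (fderiv ℝ f x) (fderiv ℝ f₀ x)
      have h1 := hf.der x
      have h2 := hf₀' x
      linarith
    have c1 : fderiv ℝ (fun z => g (f z)) x = (fderiv ℝ g (f x)).comp (fderiv ℝ f x) :=
      fderiv_fun_comp x (hg.diff _) (hf.diff x)
    have c2 : fderiv ℝ (fun z => g₀ (f₀ z)) x = (fderiv ℝ g₀ (f₀ x)).comp (fderiv ℝ f₀ x) :=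
      fderiv_fun_comp x (hg₀d _) (hf₀ x)
    have hD : ‖fderiv ℝ g₀ (f x) - fderiv ℝ g₀ (f₀ x)‖ ≤ ε * e₁ := by
      refine (norm_image_sub_le_of_fderiv (f := fderiv ℝ g₀)
        ((hg₀.fderiv_right (m := 1) (by norm_num)).differentiable (by norm_num)) (K := ε)
        (fun z => ?_) (f x) (f₀ x)).trans (mul_le_mul_of_nonneg_left (hf.val x) hε0)
      rw [← norm_iteratedFDeriv_one, norm_iteratedFDeriv_fderiv]
      exact hg₀'' z
    have key : fderiv ℝ (fun z => g (f z)) x - fderiv ℝ h₀ x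
        = (fderiv ℝ g (f x) - fderiv ℝ g₀ (f x)).comp (fderiv ℝ f x)
          + (fderiv ℝ g₀ (f x) - fderiv ℝ g₀ (f₀ x)).comp (fderiv ℝ f x)
          + (fderiv ℝ g₀ (f₀ x)).comp (fderiv ℝ f x - fderiv ℝ f₀ x)
          + (fderiv ℝ (fun z => g₀ (f₀ z)) x - fderiv ℝ h₀ x) := by
      rw [c1, c2]
      simp only [ContinuousLinearMap.sub_comp, ContinuousLinearMap.comp_sub]
      abel
    have b1 : ‖(fderiv ℝ g (f x) - fderiv ℝ g₀ (f x)).comp (fderiv ℝ f x)‖ ≤ e₂ * (1 + 2 * ε) :=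
      (ContinuousLinearMap.opNorm_comp_le _ _).trans
        (mul_le_mul (hg.der _) hfx (norm_nonneg _) he₂)
    have b2 : ‖(fderiv ℝ g₀ (f x) - fderiv ℝ g₀ (f₀ x)).comp (fderiv ℝ f x)‖
        ≤ ε * e₁ * (1 + 2 * ε) :=
      (ContinuousLinearMap.opNorm_comp_le _ _).trans
        (mul_le_mul hD hfx (norm_nonneg _) (by positivity))
    have b3 : ‖(fderiv ℝ g₀ (f₀ x)).comp (fderiv ℝ f x - fderiv ℝ f₀ x)‖ ≤ (1 + ε) * e₁ :=
      (ContinuousLinearMap.opNorm_comp_le _ _).trans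
        (mul_le_mul (hg₀' _) (hf.der x) (norm_nonneg _) (by positivity))
    have b4 := hd x
    rw [key]
    refine (norm_add_le _ _).trans ((add_le_add (norm_add₃_le) le_rfl).trans ?_)
    have h7 := mul_nonneg hε0 he₁
    have h8 := mul_nonneg hε0 he₂
    have h9 : ε * (ε * e₁) ≤ 1 / 4 * (ε * e₁) := mul_le_mul_of_nonneg_right hε h7
    nlinarith

/-! ### Uniform bounds over all partitions -/

lemma IsC1ApproxFlow.self {T c₁ a : ℝ} {μ : ℝ → ℝ → U → U} (hμ : IsC1ApproxFlow T c₁ a μ)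
    {s : ℝ} (h0 : 0 ≤ s) (hT : s ≤ T) : μ s s = fun x => x := by
  funext x
  refine sub_eq_zero.1 (norm_le_zero_iff.1 (le_of_forall_pos_le_add fun ε hε => ?_))
  obtain ⟨η, hη, h⟩ := hμ.near_id ε hε
  simpa using (h s s h0 le_rfl hT (by simpa using hη.le) x).1

lemma exists_contraction_constant {a : ℝ} (ha : 1 < a) :
    ∃ ε : ℝ, 0 < ε ∧ ε ≤ 1 / 4 ∧ (1 + 4 * ε) ^ 2 * (2 * (1 / 2 : ℝ) ^ a) < 1 := by
  have hq0 : 0 < (1 / 2 : ℝ) ^ a := by positivity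
  have hq1 : (1 / 2 : ℝ) ^ a < 1 / 2 := by
    simpa using Real.rpow_lt_rpow_of_exponent_gt (by norm_num : (0:ℝ) < 1 / 2) (by norm_num) ha
  set q := (1 / 2 : ℝ) ^ a
  refine ⟨(1 - 2 * q) / 16, by linarith, by linarith, ?_⟩
  nlinarith [mul_pos hq0 (by linarith : 0 < 1 - 2 * q),
    mul_pos hq0 (mul_pos (by linarith : 0 < 1 - 2 * q) (by linarith : 0 < 1 - 2 * q)),
    mul_pos hq0 (mul_pos hq0 (by linarith : 0 < 1 - 2 * q))]

/-- Composing `μ` along any partition of a short interval `[σ i, σ j]` stays within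
`C (σ j - σ i)^a` of `μ` in `C¹`, with `C` independent of the partition. By strong induction on the
number of points: the step containing the midpoint is singled out, and the parts on either side
have at most half the length, so that the two errors add up to at most a fraction of the allowed
one because `2 * 2^(-a) < 1`. -/
lemma exists_C1Near_gridComp {T c₁ a : ℝ} {μ : ℝ → ℝ → U → U} (hμ : IsC1ApproxFlow T c₁ a μ) :
    ∃ C > 0, ∃ δ > 0, ∀ σ : ℕ → ℝ, Monotone σ → 0 ≤ σ 0 → ∀ i j, i ≤ j → σ j ≤ T →
      σ j - σ i ≤ δ →
      C1Near (gridComp μ σ i j) (μ (σ j) (σ i)) (C * (σ j - σ i) ^ a) ∧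
      ∀ x, ‖fderiv ℝ (gridComp μ σ i j) x‖ ≤ 2 := by
  have ha := hμ.a_gt_one
  have hc := hμ.c₁_pos
  obtain ⟨ε, hε, hε4, hρ⟩ := exists_contraction_constant ha
  obtain ⟨η, hη, hid⟩ := hμ.near_id ε hε
  set q := (1 / 2 : ℝ) ^ a with hq
  have hq0 : 0 < q := by positivity
  have hq1 : q ≤ 1 := Real.rpow_le_one (by norm_num) (by norm_num) (by linarith)
  set ρ := (1 + 4 * ε) ^ 2 * (2 * q) with hρdef
  set C := 6 * c₁ / (1 - ρ) with hC
  have hC0 : 0 < C := div_pos (by linarith) (by linarith)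
  have hCρ : ρ * C + 6 * c₁ = C := by
    rw [hC]; field_simp [(by linarith : (1 - ρ) ≠ 0)]; ring
  have hδ0 : 0 < min η (min 1 (ε / (4 * C + c₁))) :=
    lt_min hη (lt_min one_pos (div_pos hε (by linarith)))
  have hD : ∀ s t, 0 ≤ s → s ≤ t → t ≤ T → t - s ≤ η → ∀ x, ‖fderiv ℝ (μ t s) x‖ ≤ 1 + ε := by
    intro s t h0 hst hT h x
    have h1 := (hid s t h0 hst hT h x).2.1
    have h2 := norm_le_norm_add_norm_sub' (fderiv ℝ (μ t s) x) (ContinuousLinearMap.id ℝ U)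
    have h3 : ‖ContinuousLinearMap.id ℝ U‖ ≤ 1 := ContinuousLinearMap.norm_id_le
    linarith
  have hdf : ∀ s t, 0 ≤ s → s ≤ t → t ≤ T → Differentiable ℝ (μ t s) := fun s t h0 hst hT =>
    (hμ.smooth s t h0 hst hT).differentiable (by norm_num)
  refine ⟨C, hC0, min η (min 1 (ε / (4 * C + c₁))), hδ0, fun σ hσ hσ0 => ?_⟩
  have hσ0' : ∀ i, 0 ≤ σ i := fun i => hσ0.trans (hσ (Nat.zero_le i))
  have small : ∀ h : ℝ, 0 ≤ h → h ≤ min η (min 1 (ε / (4 * C + c₁))) →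
      (4 * C + c₁) * h ^ a ≤ ε := by
    intro h h0 hh
    have h1 : h ≤ 1 := hh.trans ((min_le_right _ _).trans (min_le_left _ _))
    have h2 : h ≤ ε / (4 * C + c₁) := hh.trans ((min_le_right _ _).trans (min_le_right _ _))
    have h3 : h ^ a ≤ h := by
      simpa using Real.rpow_le_rpow_of_exponent_ge' h0 h1 zero_le_one ha.le
    rw [le_div_iff₀ (by linarith)] at h2
    nlinarith [mul_le_mul_of_nonneg_left h3 (by linarith : (0:ℝ) ≤ 4 * C + c₁)]
  have main : ∀ n i j, j - i ≤ n → i ≤ j → σ j ≤ T →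
      σ j - σ i ≤ min η (min 1 (ε / (4 * C + c₁))) →
      C1Near (gridComp μ σ i j) (μ (σ j) (σ i)) (C * (σ j - σ i) ^ a) := by
    intro n
    induction n with
    | zero =>
      intro i j hn hij hT hh
      obtain rfl : i = j := by omega
      have e1 : gridComp μ σ i i = fun x => x := funext (gridComp_self μ σ i)
      rw [e1, hμ.self (hσ0' i) hT, sub_self, Real.zero_rpow (by linarith)]
      exact ⟨differentiable_id, by simp, by simp⟩
    | succ n ih =>
      intro i j hn hij hT hh
      rcases hij.eq_or_lt with rfl | hlt
      · exact ih i i (by omega) le_rfl hT hh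
      have hs := hσ hij
      obtain ⟨k, hik, hkj, hk1, hk2⟩ := exists_step_around σ ((σ i + σ j) / 2) hlt
        (by linarith) (by linarith)
      have m1 := hσ hik
      have m2 := hσ (Nat.le_succ k)
      have m3 := hσ (Nat.succ_le_of_lt hkj)
      simp only [Nat.succ_eq_add_one] at m2 m3
      have hhη : σ j - σ i ≤ η := hh.trans (min_le_left _ _)
      have hsm := small _ (by linarith) hh
      -- On each half, the error is at most `C q h^a` with `h = σ j - σ i` and `q = 2^(-a)`.
      have half : ∀ p r, i ≤ p → p ≤ r → r ≤ j → r - p ≤ n → σ r - σ p ≤ (σ j - σ i) / 2 →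
          C1Near (gridComp μ σ p r) (μ (σ r) (σ p)) (C * (q * (σ j - σ i) ^ a)) := by
        intro p r hip hpr hrj hrp hl
        have m := hσ hpr
        refine (ih p r hrp hpr ((hσ hrj).trans hT) (by linarith)).mono
          (mul_le_mul_of_nonneg_left ?_ hC0.le)
        rw [hq, ← Real.mul_rpow (by norm_num) (by linarith)]
        exact Real.rpow_le_rpow (by linarith) (by linarith) (by linarith)
      set H := (σ j - σ i) ^ a with hH
      have hH0 : 0 ≤ H := Real.rpow_nonneg (by linarith) a
      have hqH : q * H ≤ H := by nlinarith
      have hmonoH : ∀ r, i ≤ r → r ≤ j → c₁ * (σ r - σ i) ^ a ≤ c₁ * H := by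
        intro r h1 h2
        have := hσ h1
        have := hσ h2
        exact mul_le_mul_of_nonneg_left
          (Real.rpow_le_rpow (by linarith) (by linarith) (by linarith)) hc.le
      have f1 := half i k le_rfl hik hkj.le (by omega) (by linarith)
      have f3 := half (k + 1) j (by omega) hkj le_rfl (by omega) (by linarith)
      have f2 : C1Near (μ (σ (k + 1)) (σ k)) (μ (σ (k + 1)) (σ k)) 0 :=
        ⟨hdf _ _ (hσ0' k) m2 (by linarith), by simp, by simp⟩
      have hCqH : C * (q * H) ≤ C * H := mul_le_mul_of_nonneg_left hqH hC0.le
      have hCqH0 : 0 ≤ C * (q * H) := by positivity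
      have hcH : 0 ≤ c₁ * H := by positivity
      have f12 := C1Near.comp (h₀ := μ (σ (k + 1)) (σ i)) (e₃ := c₁ * H) hε4 hCqH0
        le_rfl (by nlinarith) f1 f2
        (hdf _ _ (hσ0' i) m1 (by linarith)) (hμ.smooth _ _ (hσ0' k) m2 (by linarith))
        (hD _ _ (hσ0' i) m1 (by linarith) (by linarith))
        (hD _ _ (hσ0' k) m2 (by linarith) (by linarith))
        (fun x => (hid _ _ (hσ0' k) m2 (by linarith) (by linarith) x).2.2)
        (fun x => ((hμ.approx _ _ _ (hσ0' i) m1 m2 (by linarith) x).1).trans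
          (hmonoH _ (by omega) hkj))
        (fun x => ((hμ.approx _ _ _ (hσ0' i) m1 m2 (by linarith) x).2).trans
          (hmonoH _ (by omega) hkj))
      have e12 : (1 + 4 * ε) * (C * (q * H) + 0) + c₁ * H ≤ ε := by nlinarith
      have f123 := C1Near.comp (h₀ := μ (σ j) (σ i)) (e₃ := c₁ * H) hε4 (by positivity)
        hCqH0 e12 f12 f3
        (hdf _ _ (hσ0' i) (m1.trans m2) (by linarith)) (hμ.smooth _ _ (hσ0' (k + 1)) m3 hT)
        (hD _ _ (hσ0' i) (m1.trans m2) (by linarith) (by linarith))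
        (hD _ _ (hσ0' (k + 1)) m3 hT (by linarith))
        (fun x => (hid _ _ (hσ0' (k + 1)) m3 hT (by linarith) x).2.2)
        (fun x => (hμ.approx _ _ _ (hσ0' i) (m1.trans m2) m3 hT x).1)
        (fun x => (hμ.approx _ _ _ (hσ0' i) (m1.trans m2) m3 hT x).2)
      have e : (fun x => gridComp μ σ (k + 1) j (μ (σ (k + 1)) (σ k) (gridComp μ σ i k x)))
          = gridComp μ σ i j := by
        funext x
        rw [← gridComp_succ μ σ hik, gridComp_trans μ σ (by omega) hkj]
      rw [e] at f123
      refine f123.mono ?_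
      have g1 : 0 ≤ (C * q * H) * (4 * ε) := by positivity
      have g2 : 0 ≤ (C * q * H) * (4 * ε) * (4 * ε) := by positivity
      have g3 : ε * (c₁ * H) ≤ 1 / 4 * (c₁ * H) := mul_le_mul_of_nonneg_right hε4 hcH
      have g4 : C * H = (ρ * C + 6 * c₁) * H := by rw [hCρ]
      rw [g4, hρdef]
      nlinarith
  intro i j hij hT hh
  have hs := hσ hij
  have hN := main (j - i) i j le_rfl hij hT hh
  refine ⟨hN, fun x => ?_⟩
  have h1 := hN.der x
  have h2 := hD _ _ (hσ0' i) hs hT (hh.trans (min_le_left _ _)) x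
  have h3 := norm_le_norm_add_norm_sub' (fderiv ℝ (gridComp μ σ i j) x) (fderiv ℝ (μ (σ j) (σ i)) x)
  have h4 := small _ (by linarith) hh
  have h5 : 0 ≤ (σ j - σ i) ^ a := Real.rpow_nonneg (by linarith) a
  nlinarith

/-! ### Refinement of partitions, and uniqueness -/

/-- The constants `C`, `δ` and `L` for which compositions along partitions of intervals of length
at most `δ` are within `C h^a` of `μ`, and compositions along partitions of mesh at most `δ`, over
intervals of any length, are `L`-Lipschitz. -/
structure GridBounds (T a : ℝ) (μ : ℝ → ℝ → U → U) (C δ L : ℝ) : Prop where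
  C_pos : 0 < C
  δ_pos : 0 < δ
  L_pos : 0 < L
  near : ∀ σ : ℕ → ℝ, Monotone σ → 0 ≤ σ 0 → ∀ i j, i ≤ j → σ j ≤ T → σ j - σ i ≤ δ →
    ∀ x, ‖gridComp μ σ i j x - μ (σ j) (σ i) x‖ ≤ C * (σ j - σ i) ^ a
  lip : ∀ σ : ℕ → ℝ, Monotone σ → 0 ≤ σ 0 → (∀ k, σ (k + 1) - σ k ≤ δ) → ∀ i j, i ≤ j →
    σ j ≤ T → ∀ x y, ‖gridComp μ σ i j x - gridComp μ σ i j y‖ ≤ L * ‖x - y‖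

/-- Long intervals are cut into boundedly many pieces of length at most `δ`. -/
lemma exists_gridBounds {T c₁ a : ℝ} {μ : ℝ → ℝ → U → U} (hμ : IsC1ApproxFlow T c₁ a μ) :
    ∃ C δ L, GridBounds T a μ C δ L := by
  obtain ⟨C, hC, δ, hδ, h⟩ := exists_C1Near_gridComp hμ
  obtain ⟨N, hN⟩ := exists_nat_ge (T / δ)
  rw [div_le_iff₀ hδ] at hN
  refine ⟨C, δ, 2 * 4 ^ N, hC, hδ, by positivity,
    fun σ hσ h0 i j hij hT hd => (h σ hσ h0 i j hij hT hd).1.val, ?_⟩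
  intro σ hσ h0 hmesh
  have short : ∀ i j, i ≤ j → σ j ≤ T → σ j - σ i ≤ δ → ∀ x y,
      ‖gridComp μ σ i j x - gridComp μ σ i j y‖ ≤ 2 * ‖x - y‖ := fun i j hij hT hd =>
    norm_image_sub_le_of_fderiv (h σ hσ h0 i j hij hT hd).1.diff (h σ hσ h0 i j hij hT hd).2
  have long : ∀ n : ℕ, ∀ i j, i ≤ j → σ j ≤ T → σ j - σ i ≤ n * δ → ∀ x y,
      ‖gridComp μ σ i j x - gridComp μ σ i j y‖ ≤ 2 * 4 ^ n * ‖x - y‖ := by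
    intro n
    induction n with
    | zero =>
      intro i j hij hT hd x y
      have := short i j hij hT (by simp at hd; linarith) x y
      simpa using this
    | succ n ih =>
      intro i j hij hT hd x y
      rcases le_or_gt (σ j - σ i) δ with hs | hs
      · refine (short i j hij hT hs x y).trans (mul_le_mul_of_nonneg_right ?_ (norm_nonneg _))
        have := one_le_pow₀ (M₀ := ℝ) (n := n + 1) (by norm_num : (1:ℝ) ≤ 4)
        linarith
      · have hlt : i < j := lt_of_le_of_ne hij (by rintro rfl; simp at hs; linarith)
        obtain ⟨k, hik, hkj, h1, h2⟩ := exists_step_around σ (σ i + δ) hlt (by linarith)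
          (by linarith)
        have hkT : σ (k + 1) ≤ T := (hσ hkj).trans hT
        have hkT' : σ k ≤ T := (hσ hkj.le).trans hT
        push_cast at hd
        have b1 := short i k hik hkT' (by linarith) x y
        have b2 := short k (k + 1) (by omega) hkT (hmesh k) (gridComp μ σ i k x)
          (gridComp μ σ i k y)
        have b3 := ih (k + 1) j hkj hT (by linarith)
          (gridComp μ σ k (k + 1) (gridComp μ σ i k x)) (gridComp μ σ k (k + 1) (gridComp μ σ i k y))
        rw [gridComp_trans μ σ hik (Nat.le_succ k), gridComp_trans μ σ hik (Nat.le_succ k)] at b2 b3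
        rw [gridComp_trans μ σ (by omega) hkj, gridComp_trans μ σ (by omega) hkj] at b3
        refine b3.trans ?_
        have : ‖gridComp μ σ i (k + 1) x - gridComp μ σ i (k + 1) y‖ ≤ 4 * ‖x - y‖ := by linarith
        calc _ ≤ 2 * 4 ^ n * (4 * ‖x - y‖) := mul_le_mul_of_nonneg_left this (by positivity)
          _ = _ := by ring
  intro i j hij hT
  have := hσ (Nat.zero_le i)
  exact long N i j hij hT (by linarith)

/-- Passing from the partition `σ` to a refinement `τ` changes the composition by at most
`L C η^a` per step of `σ`: replace the steps of the refinement by those of `σ` one at a time,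
from the left, the maps applied afterwards being `L`-Lipschitz. -/
lemma GridBounds.refinement {T a C δ L : ℝ} {μ : ℝ → ℝ → U → U} (hb : GridBounds T a μ C δ L)
    (ha : 0 ≤ a) {σ τ : ℕ → ℝ} {r : ℕ → ℕ} {η : ℝ} (hσ : Monotone σ) (hτ : Monotone τ)
    (hr : Monotone r) (hτ0 : 0 ≤ τ 0) (hrσ : ∀ k, τ (r k) = σ k) (hη : η ≤ δ)
    (hσm : ∀ k, σ (k + 1) - σ k ≤ η) (hτm : ∀ k, τ (k + 1) - τ k ≤ δ)
    {i j : ℕ} (hij : i ≤ j) (hT : σ j ≤ T) (x : U) :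
    ‖gridComp μ τ (r i) (r j) x - gridComp μ σ i j x‖ ≤ (j - i : ℝ) * (L * (C * η ^ a)) := by
  have main : ∀ k, i ≤ k → k ≤ j →
      ‖gridComp μ τ (r i) (r j) x - gridComp μ τ (r k) (r j) (gridComp μ σ i k x)‖
        ≤ (k - i : ℝ) * (L * (C * η ^ a)) := by
    intro k hik
    induction k, hik using Nat.le_induction with
    | base => intro _; simp [gridComp_self]
    | succ k hik ih =>
      intro hkj
      have h1 := ih (by omega)
      have hm := hσ (Nat.le_succ k)
      have hTk : τ (r (k + 1)) ≤ T := by rw [hrσ]; exact (hσ hkj).trans hT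
      have h2 := hb.near τ hτ hτ0 (r k) (r (k + 1)) (hr (Nat.le_succ k)) hTk
        (by rw [hrσ, hrσ]; exact (hσm k).trans hη) (gridComp μ σ i k x)
      rw [hrσ, hrσ, ← gridComp_succ μ σ hik] at h2
      have h3 := hb.lip τ hτ hτ0 hτm (r (k + 1)) (r j) (hr hkj) (by rwa [hrσ])
        (gridComp μ τ (r k) (r (k + 1)) (gridComp μ σ i k x)) (gridComp μ σ i (k + 1) x)
      rw [gridComp_trans μ τ (hr (Nat.le_succ k)) (hr hkj)] at h3
      have h4 : (σ (k + 1) - σ k) ^ a ≤ η ^ a :=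
        Real.rpow_le_rpow (by simpa using hm) (hσm k) ha
      have h5 := mul_le_mul_of_nonneg_left (h2.trans (mul_le_mul_of_nonneg_left h4 hb.C_pos.le))
        hb.L_pos.le
      have h6 := norm_sub_le_norm_sub_add_norm_sub (gridComp μ τ (r i) (r j) x)
        (gridComp μ τ (r k) (r j) (gridComp μ σ i k x))
        (gridComp μ τ (r (k + 1)) (r j) (gridComp μ σ i (k + 1) x))
      push_cast
      linarith
  simpa [gridComp_self] using main j hij le_rfl

/-- For a fixed length `T`, the total error `N (T/N)^a` of `N` equal steps tends to `0`. -/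
lemma tendsto_nat_mul_div_rpow {a h : ℝ} (ha : 1 < a) (hh : 0 < h) :
    Filter.Tendsto (fun N : ℕ => (N : ℝ) * (h / N) ^ a) Filter.atTop (nhds 0) := by
  have h1 : Filter.Tendsto (fun N : ℕ => h / (N : ℝ)) Filter.atTop (nhds 0) :=
    tendsto_const_div_atTop_nhds_zero_nat h
  have h2 := (h1.rpow_const (p := a - 1) (Or.inr (by linarith))).const_mul h
  rw [Real.zero_rpow (by linarith), mul_zero] at h2
  refine h2.congr' ?_
  filter_upwards [Filter.eventually_gt_atTop 0] with N hN
  have hN' : (0:ℝ) < N := by exact_mod_cast hN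
  rw [Real.rpow_sub_one (by positivity)]
  field_simp

/-- Uniqueness: two flows that are `O(h^a)`-close to each other at small scales agree, as soon as
one of them is Lipschitz. Passing from one flow to the other on each of `n` equal steps costs
`n * L * K * (h/n)^a → 0`. -/
lemma IsFlow.eq_of_close {T a K L δ : ℝ} {φ ψ : ℝ → ℝ → U → U} (ha : 1 < a) (hL : 0 ≤ L)
    (hδ : 0 < δ) (hφ : IsFlow T φ) (hψ : IsFlow T ψ) (hcl : Close T a K δ ψ φ)
    (hlip : ∀ s t, 0 ≤ s → s ≤ t → t ≤ T → ∀ x y, ‖φ t s x - φ t s y‖ ≤ L * ‖x - y‖)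
    {s t : ℝ} (h0 : 0 ≤ s) (hst : s ≤ t) (hT : t ≤ T) (x : U) : ψ t s x = φ t s x := by
  rcases hst.eq_or_lt with rfl | hlt
  · rw [hφ.1 s h0 hT, hψ.1 s h0 hT]
  have hh : 0 < t - s := by linarith
  have key : ∀ᶠ n : ℕ in Filter.atTop,
      ‖ψ t s x - φ t s x‖ ≤ (L * K) * ((n : ℝ) * ((t - s) / n) ^ a) := by
    have h1 : Filter.Tendsto (fun N : ℕ => (t - s) / (N : ℝ)) Filter.atTop (nhds 0) :=
      tendsto_const_div_atTop_nhds_zero_nat (t - s)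
    filter_upwards [Filter.eventually_gt_atTop 0, h1.eventually_le_const hδ] with n hn hnδ
    have hn' : (0:ℝ) < n := by exact_mod_cast hn
    set e := (t - s) / n with he
    have he0 : 0 < e := by positivity
    have hne : n * e = t - s := by rw [he]; field_simp
    have hle : ∀ k : ℕ, k ≤ n → s + k * e ≤ t := by
      intro k hk
      have : (k:ℝ) * e ≤ n * e := mul_le_mul_of_nonneg_right (by exact_mod_cast hk) he0.le
      linarith
    have hge : ∀ k : ℕ, s ≤ s + k * e := fun k => by
      have : 0 ≤ (k:ℝ) * e := by positivity
      linarith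
    have ind : ∀ k : ℕ, k ≤ n →
        ‖φ t (s + k * e) (ψ (s + k * e) s x) - φ t s x‖ ≤ k * (L * (K * e ^ a)) := by
      intro k
      induction k with
      | zero => intro _; simp [hψ.1 s h0 (hst.trans hT)]
      | succ k ih =>
        intro hk
        have i1 := ih (by omega)
        have hk' : s + k * e ≤ s + (k + 1 : ℕ) * e := by push_cast; nlinarith
        have i2 := hcl (s + k * e) (s + (k + 1 : ℕ) * e) (h0.trans (hge k)) hk'
          ((hle _ hk).trans hT) (by push_cast; linarith) (ψ (s + k * e) s x)
        rw [hψ.2 _ _ _ h0 (hge k) hk' ((hle _ hk).trans hT)] at i2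
        have i3 := hlip (s + (k + 1 : ℕ) * e) t (h0.trans (hge _)) (hle _ hk) hT
          (ψ (s + (k + 1 : ℕ) * e) s x) (φ (s + (k + 1 : ℕ) * e) (s + k * e) (ψ (s + k * e) s x))
        rw [hφ.2 _ _ _ (h0.trans (hge k)) hk' (hle _ hk) hT] at i3
        have i4 := mul_le_mul_of_nonneg_left i2 hL
        have i5 : s + (k + 1 : ℕ) * e - (s + k * e) = e := by push_cast; ring
        rw [i5] at i4
        have i6 := norm_sub_le_norm_sub_add_norm_sub
          (φ t (s + (k + 1 : ℕ) * e) (ψ (s + (k + 1 : ℕ) * e) s x))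
          (φ t (s + k * e) (ψ (s + k * e) s x)) (φ t s x)
        have i7 : ((k + 1 : ℕ) : ℝ) * (L * (K * e ^ a))
          = L * (K * e ^ a) + k * (L * (K * e ^ a)) := by push_cast; ring
        rw [i7]
        linarith
    have fin := ind n le_rfl
    rw [hne, add_sub_cancel, hφ.1 t (h0.trans hst) hT] at fin
    calc _ ≤ _ := fin
      _ = _ := by ring
  have lim := (tendsto_nat_mul_div_rpow ha hh).const_mul (L * K)
  rw [mul_zero] at lim
  exact sub_eq_zero.1 (norm_le_zero_iff.1 (ge_of_tendsto lim key))

/-! ### The limit flow -/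

/-- The uniform grid of mesh `T/N`. -/
def grid (T : ℝ) (N k : ℕ) : ℝ := k * (T / N)

/-- The index of the last point of `grid T N` at or before `s` (for `s ≥ 0`). -/
def gridIdx (T : ℝ) (N : ℕ) (s : ℝ) : ℕ := ⌊s / (T / N)⌋₊

/-- The flow obtained by composing `μ` along the uniform grid of mesh `T/N`, with the times
rounded down to the grid. Rounding the times, instead of adding them to the grid, makes the flow
identity hold exactly for every `N`. -/
def gridFlow (T : ℝ) (μ : ℝ → ℝ → U → U) (N : ℕ) (t s : ℝ) : U → U :=
  gridComp μ (grid T N) (gridIdx T N s) (gridIdx T N t)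

section Grid

variable {T : ℝ} {N : ℕ} {s t : ℝ}

lemma grid_mono (hT : 0 < T) : Monotone (grid T N) := fun i j h => by
  unfold grid
  have : (i : ℝ) ≤ j := by exact_mod_cast h
  gcongr

lemma grid_zero : grid T N 0 = 0 := by simp [grid]

lemma grid_step (k : ℕ) : grid T N (k + 1) - grid T N k = T / N := by
  simp only [grid]; push_cast; ring

lemma gridIdx_mono (hT : 0 < T) (hst : s ≤ t) : gridIdx T N s ≤ gridIdx T N t := by
  unfold gridIdx
  gcongr

lemma grid_gridIdx_le (hT : 0 < T) (hN : 0 < N) (hs : 0 ≤ s) : grid T N (gridIdx T N s) ≤ s := by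
  have hN' : (0:ℝ) < N := by exact_mod_cast hN
  rw [grid, gridIdx, ← le_div_iff₀ (by positivity)]
  exact Nat.floor_le (by positivity)

lemma lt_grid_gridIdx (hT : 0 < T) (hN : 0 < N) : s < grid T N (gridIdx T N s) + T / N := by
  have hN' : (0:ℝ) < N := by exact_mod_cast hN
  have := Nat.lt_floor_add_one (s / (T / N))
  rw [div_lt_iff₀ (by positivity)] at this
  rw [grid, gridIdx]
  linarith

lemma grid_mul {R : ℕ} (hR : 0 < R) (k : ℕ) : grid T (N * R) (k * R) = grid T N k := by
  have hR' : (R:ℝ) ≠ 0 := by exact_mod_cast hR.ne'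
  simp only [grid]; push_cast
  rw [mul_assoc, mul_div_assoc', mul_comm (R:ℝ) T, mul_div_mul_right _ _ hR']

lemma gridIdx_mul_le (hT : 0 < T) (hN : 0 < N) {R : ℕ} (hR : 0 < R) (hs : 0 ≤ s) :
    gridIdx T N s * R ≤ gridIdx T (N * R) s := by
  have hN' : (0:ℝ) < ((N * R : ℕ) : ℝ) := by exact_mod_cast Nat.mul_pos hN hR
  have h := grid_gridIdx_le hT hN hs
  rw [← grid_mul hR, grid, ← le_div_iff₀ (by positivity)] at h
  exact Nat.le_floor h

lemma tendsto_grid_gridIdx (hT : 0 < T) (hs : 0 ≤ s) :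
    Filter.Tendsto (fun N => grid T N (gridIdx T N s)) Filter.atTop (nhds s) := by
  have h1 : Filter.Tendsto (fun N : ℕ => s - T / (N : ℝ)) Filter.atTop (nhds s) := by
    simpa using (tendsto_const_div_atTop_nhds_zero_nat T).const_sub s
  refine tendsto_of_tendsto_of_tendsto_of_le_of_le' h1 tendsto_const_nhds ?_ ?_
  · filter_upwards [Filter.eventually_gt_atTop 0] with N hN
    have := lt_grid_gridIdx (s := s) hT hN
    linarith
  · filter_upwards [Filter.eventually_gt_atTop 0] with N hN
    exact grid_gridIdx_le hT hN hs

lemma gridFlow_self (μ : ℝ → ℝ → U → U) (x : U) : gridFlow T μ N s s x = x :=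
  gridComp_self _ _ _ _

lemma gridFlow_trans (hT : 0 < T) (μ : ℝ → ℝ → U → U) {u : ℝ} (hsu : s ≤ u) (hut : u ≤ t) (x : U) :
    gridFlow T μ N t u (gridFlow T μ N u s x) = gridFlow T μ N t s x :=
  gridComp_trans _ _ (gridIdx_mono hT hsu) (gridIdx_mono hT hut) _

end Grid

lemma GridBounds.gridFlow_lip {T a C δ L : ℝ} {μ : ℝ → ℝ → U → U} (hb : GridBounds T a μ C δ L)
    (hT : 0 < T) : ∀ᶠ N : ℕ in Filter.atTop, ∀ s t, 0 ≤ s → s ≤ t → t ≤ T → ∀ x y,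
      ‖gridFlow T μ N t s x - gridFlow T μ N t s y‖ ≤ L * ‖x - y‖ := by
  filter_upwards [Filter.eventually_gt_atTop 0,
    (tendsto_const_div_atTop_nhds_zero_nat T).eventually_le_const hb.δ_pos] with N hN hNδ
  intro s t h0 hst htT
  exact hb.lip _ (grid_mono hT) grid_zero.ge (fun k => (grid_step k).trans_le hNδ) _ _
    (gridIdx_mono hT hst) ((grid_gridIdx_le hT hN (h0.trans hst)).trans htT)

/-- Refining the uniform grid of mesh `T/N` changes the flow little, uniformly in the refinement.
The two flows are compared along the coarse grid; what remains are two pieces of length at most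
`T/N`, caused by the different rounding of `s` and `t`, on which the fine flow is near the
identity. -/
lemma GridBounds.gridFlow_mul {T c₁ a C δ L : ℝ} {μ : ℝ → ℝ → U → U}
    (hμ : IsC1ApproxFlow T c₁ a μ) (hb : GridBounds T a μ C δ L) (hT : 0 < T)
    {ε : ℝ} (hε : 0 < ε) :
    ∀ᶠ N : ℕ in Filter.atTop, ∀ R, 0 < R → ∀ s t, 0 ≤ s → s ≤ t → t ≤ T → ∀ x,
      ‖gridFlow T μ (N * R) t s x - gridFlow T μ N t s x‖ ≤ ε := by
  have ha := hμ.a_gt_one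
  have hL := hb.L_pos
  have hC := hb.C_pos
  -- The three contributions are `L * 2e`, `2e` and `L * C * e`.
  obtain ⟨e, he, hee⟩ : ∃ e > 0, (2 * L + 2 + L * C) * e ≤ ε :=
    ⟨ε / (2 * L + 2 + L * C), by positivity, by rw [mul_div_cancel₀]; positivity⟩
  obtain ⟨η, hη, hid⟩ := hμ.near_id e he
  have t1 := tendsto_const_div_atTop_nhds_zero_nat T
  have t2 := ((t1.rpow_const (p := a) (Or.inr (by linarith))).const_mul C)
  rw [Real.zero_rpow (by linarith), mul_zero] at t2
  filter_upwards [Filter.eventually_gt_atTop 0, t1.eventually_le_const hb.δ_pos,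
    t1.eventually_le_const hη, t2.eventually_le_const he,
    (tendsto_nat_mul_div_rpow ha hT).eventually_le_const he] with N hN n1 n2 n3 n4
  intro R hR s t h0 hst htT x
  have hNR : 0 < N * R := Nat.mul_pos hN hR
  have hN' : (0:ℝ) < N := by exact_mod_cast hN
  have hR' : (1:ℝ) ≤ R := by exact_mod_cast hR
  have hmesh : T / ((N * R : ℕ) : ℝ) ≤ δ := by
    refine le_trans ?_ n1
    push_cast
    exact div_le_div_of_nonneg_left hT.le hN' (by nlinarith)
  have hτm : ∀ k, grid T (N * R) (k + 1) - grid T (N * R) k ≤ δ :=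
    fun k => (grid_step k).trans_le hmesh
  have t0 : 0 ≤ t := h0.trans hst
  have edge : ∀ r, 0 ≤ r → r ≤ T → ∀ y,
      ‖gridComp μ (grid T (N * R)) (gridIdx T N r * R) (gridIdx T (N * R) r) y - y‖ ≤ 2 * e := by
    intro r hr hrT y
    have hi := gridIdx_mul_le hT hN hR hr
    have g0 : 0 ≤ grid T (N * R) (gridIdx T N r * R) := by
      have := grid_mono (N := N * R) hT (Nat.zero_le (gridIdx T N r * R))
      rwa [grid_zero] at this
    have g1 := grid_mono (N := N * R) hT hi
    have g2 := grid_gridIdx_le hT hNR hr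
    have g3 := lt_grid_gridIdx (s := r) hT hN
    rw [← grid_mul hR] at g3
    have g4 := hb.near (grid T (N * R)) (grid_mono hT) grid_zero.ge _ _ hi (g2.trans hrT)
      (by linarith) y
    have g5 := (hid _ _ g0 g1 (g2.trans hrT) (by linarith) y).1
    have g6 : C * (grid T (N * R) (gridIdx T (N * R) r) - grid T (N * R) (gridIdx T N r * R)) ^ a
        ≤ C * (T / N) ^ a :=
      mul_le_mul_of_nonneg_left
        (Real.rpow_le_rpow (by linarith) (by linarith) (by linarith)) hC.le
    have g7 := norm_sub_le_norm_sub_add_norm_sub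
      (gridComp μ (grid T (N * R)) (gridIdx T N r * R) (gridIdx T (N * R) r) y)
      (μ (grid T (N * R) (gridIdx T (N * R) r)) (grid T (N * R) (gridIdx T N r * R)) y) y
    linarith
  have jT : grid T N (gridIdx T N t) ≤ T := (grid_gridIdx_le hT hN t0).trans htT
  have hij := gridIdx_mono (N := N) hT hst
  have hij' := gridIdx_mono (N := N * R) hT hst
  have is := gridIdx_mul_le hT hN hR h0
  have it := gridIdx_mul_le hT hN hR t0
  have core := hb.refinement (by linarith : 0 ≤ a) (σ := grid T N) (τ := grid T (N * R))
    (r := fun k => k * R) (η := T / N) (grid_mono hT) (grid_mono hT)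
    (fun i j h => Nat.mul_le_mul_right R h) grid_zero.ge (grid_mul hR) n1
    (fun k => (grid_step k).le) hτm hij jT x
  have cnt : ((gridIdx T N t : ℝ) - gridIdx T N s) ≤ N := by
    have : (gridIdx T N t : ℝ) * (T / N) ≤ N * (T / N) := by
      have : (N : ℝ) * (T / N) = T := by field_simp
      rw [this]; exact jT
    have := le_of_mul_le_mul_right this (by positivity)
    have : (0:ℝ) ≤ gridIdx T N s := Nat.cast_nonneg _
    linarith
  have core' : ((gridIdx T N t : ℝ) - gridIdx T N s) * (L * (C * (T / N) ^ a)) ≤ L * C * e := by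
    calc _ ≤ (N : ℝ) * (L * (C * (T / N) ^ a)) := mul_le_mul_of_nonneg_right cnt (by positivity)
      _ = L * C * (N * (T / N) ^ a) := by ring
      _ ≤ _ := mul_le_mul_of_nonneg_left n4 (by positivity)
  have e1 := hb.lip (grid T (N * R)) (grid_mono hT) grid_zero.ge hτm _ _ hij'
    ((grid_gridIdx_le hT hNR t0).trans htT) x
    (gridComp μ (grid T (N * R)) (gridIdx T N s * R) (gridIdx T (N * R) s) x)
  rw [gridComp_trans μ _ is hij',
    ← gridComp_trans μ _ (Nat.mul_le_mul_right R hij) it, norm_sub_rev x] at e1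
  have e2 := edge t t0 htT
    (gridComp μ (grid T (N * R)) (gridIdx T N s * R) (gridIdx T N t * R) x)
  have e3 := mul_le_mul_of_nonneg_left (edge s h0 (hst.trans htT) x) hL.le
  unfold gridFlow
  set A := gridComp μ (grid T (N * R)) (gridIdx T (N * R) s) (gridIdx T (N * R) t) x
  set D := gridComp μ (grid T (N * R)) (gridIdx T N s * R) (gridIdx T N t * R) x
  set B := gridComp μ (grid T (N * R)) (gridIdx T N t * R) (gridIdx T (N * R) t) D
  set E := gridComp μ (grid T N) (gridIdx T N s) (gridIdx T N t) x
  have f1 := norm_sub_le_norm_sub_add_norm_sub A B E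
  have f2 := norm_sub_le_norm_sub_add_norm_sub B D E
  linarith

/-- The grid flows converge; those for `N` and `M` are compared through the one for `N * M`. -/
lemma GridBounds.gridFlow_cauchy {T c₁ a C δ L : ℝ} {μ : ℝ → ℝ → U → U}
    (hμ : IsC1ApproxFlow T c₁ a μ) (hb : GridBounds T a μ C δ L) (hT : 0 < T)
    {s t : ℝ} (h0 : 0 ≤ s) (hst : s ≤ t) (htT : t ≤ T) (x : U) :
    CauchySeq fun N => gridFlow T μ N t s x := by
  refine Metric.cauchySeq_iff.2 fun ε hε => ?_
  obtain ⟨N₀, h⟩ := Filter.eventually_atTop.1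
    ((hb.gridFlow_mul hμ hT (by linarith : 0 < ε / 3)).and (Filter.eventually_gt_atTop 0))
  refine ⟨N₀, fun M hM N hN => ?_⟩
  have h1 := (h M hM).1 N (h N hN).2 s t h0 hst htT x
  have h2 := (h N hN).1 M (h M hM).2 s t h0 hst htT x
  rw [mul_comm] at h2
  rw [dist_eq_norm]
  rw [norm_sub_rev] at h1
  have := norm_sub_le_norm_sub_add_norm_sub (gridFlow T μ M t s x)
    (gridFlow T μ (M * N) t s x) (gridFlow T μ N t s x)
  linarith

/-- The limit of the grid flows is a Lipschitz flow close to `μ`; continuity of `μ` removes the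
effect of rounding the times in the closeness estimate. -/
lemma exists_lipschitz_flow {T c₁ a : ℝ} (hT : 0 < T) {μ : ℝ → ℝ → U → U}
    (hμ : IsC1ApproxFlow T c₁ a μ) :
    ∃ φ : ℝ → ℝ → U → U, IsFlow T φ ∧ (∃ c, ∃ δ > (0:ℝ), Close T a c δ φ μ) ∧
      ∃ L, 0 ≤ L ∧ ∀ s t, 0 ≤ s → s ≤ t → t ≤ T → ∀ x y,
        ‖φ t s x - φ t s y‖ ≤ L * ‖x - y‖ := by
  have ha := hμ.a_gt_one
  obtain ⟨C, δ, L, hb⟩ := exists_gridBounds hμ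
  have hL := hb.L_pos
  set φ : ℝ → ℝ → U → U := fun t s x => Filter.atTop.limUnder (fun N => gridFlow T μ N t s x)
  have hφ : ∀ s t, 0 ≤ s → s ≤ t → t ≤ T → ∀ x,
      Filter.Tendsto (fun N => gridFlow T μ N t s x) Filter.atTop (nhds (φ t s x)) :=
    fun s t h0 hst htT x => (hb.gridFlow_cauchy hμ hT h0 hst htT x).tendsto_limUnder
  have hlip := hb.gridFlow_lip hT
  refine ⟨φ, ⟨fun s h0 hs x => ?_, fun s u t h0 hsu hut htT x => ?_⟩,
    ⟨C, δ / 2, half_pos hb.δ_pos, fun s t h0 hst htT hd x => ?_⟩, L, hL.le,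
    fun s t h0 hst htT x y => ?_⟩
  · exact tendsto_nhds_unique (hφ s s h0 le_rfl hs x) (by simp [gridFlow_self])
  · have h1 := hφ u t (h0.trans hsu) hut htT (φ u s x)
    have h2 := hφ s t h0 (hsu.trans hut) htT x
    have h3 := (hφ s u h0 hsu (hut.trans htT) x)
    have h4 : Filter.Tendsto (fun N => gridFlow T μ N t u (φ u s x) - gridFlow T μ N t s x)
        Filter.atTop (nhds 0) := by
      have h5 := ((tendsto_const_nhds (x := φ u s x)).sub h3).norm.const_mul L
      rw [sub_self, norm_zero, mul_zero] at h5
      refine squeeze_zero_norm' ?_ h5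
      filter_upwards [hlip] with N hN
      rw [← gridFlow_trans hT μ hsu hut]
      exact hN u t (h0.trans hsu) hut htT _ _
    exact sub_eq_zero.1 (tendsto_nhds_unique (h1.sub h2) h4)
  · have t0 := h0.trans hst
    have gs := tendsto_grid_gridIdx hT h0
    have gt := tendsto_grid_gridIdx hT t0
    have g0 : ∀ N r, 0 ≤ grid T N (gridIdx T N r) := fun N r => by
      have := grid_mono (N := N) hT (Nat.zero_le (gridIdx T N r))
      rwa [grid_zero] at this
    have hμlim : Filter.Tendsto
        (fun N => μ (grid T N (gridIdx T N t)) (grid T N (gridIdx T N s)) x)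
        Filter.atTop (nhds (μ t s x)) := by
      refine Metric.tendsto_nhds.2 fun ε hε => ?_
      obtain ⟨η, hη, h⟩ := hμ.cont s t h0 hst htT (ε / 2) (half_pos hε)
      filter_upwards [Metric.tendsto_nhds.1 gs η hη, Metric.tendsto_nhds.1 gt η hη,
        Filter.eventually_gt_atTop 0] with N n1 n2 hN
      rw [Real.dist_eq] at n1 n2
      rw [dist_eq_norm]
      have := h _ _ (g0 N s) (grid_mono hT (gridIdx_mono hT hst))
        ((grid_gridIdx_le hT hN t0).trans htT) n1.le n2.le x
      linarith
    have rlim := ((gt.sub gs).rpow_const (p := a) (Or.inr (by linarith))).const_mul C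
    refine le_of_tendsto_of_tendsto ((hφ s t h0 hst htT x).sub hμlim).norm rlim ?_
    filter_upwards [Filter.eventually_gt_atTop 0,
      (gt.sub gs).eventually_le_const
        (by linarith [hb.δ_pos] : t - s < δ)] with N hN hNδ
    exact hb.near _ (grid_mono hT) grid_zero.ge _ _ (gridIdx_mono hT hst)
      ((grid_gridIdx_le hT hN t0).trans htT) hNδ x
  · refine le_of_tendsto ((hφ s t h0 hst htT x).sub (hφ s t h0 hst htT y)).norm ?_
    filter_upwards [hlip] with N hN
    exact hN s t h0 hst htT x y

/-- A `C¹`-approximate flow on a Banach space determines a unique flow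
`(φ_{ts})_{0 ≤ s ≤ t ≤ T}` at uniform distance `O(|t-s|^a)` from it on small intervals. -/
theorem c1ApproxFlow_determines_unique_flow
    {T c₁ a : ℝ} (hT : 0 < T) (μ : ℝ → ℝ → U → U)
    (hμ : IsC1ApproxFlow T c₁ a μ) :
    ∃ φ : ℝ → ℝ → U → U,
      (IsFlow T φ ∧ ∃ c : ℝ, ∃ δ > (0:ℝ), Close T a c δ φ μ) ∧
      ∀ ψ : ℝ → ℝ → U → U,
        (IsFlow T ψ ∧ ∃ c : ℝ, ∃ δ > (0:ℝ), Close T a c δ ψ μ) →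
        ∀ s t, 0 ≤ s → s ≤ t → t ≤ T → ∀ x, ψ t s x = φ t s x := by
  obtain ⟨φ, hφ, ⟨c, δ, hδ, hc⟩, L, hL, hlip⟩ := exists_lipschitz_flow hT hμ
  refine ⟨φ, ⟨hφ, c, δ, hδ, hc⟩, ?_⟩
  rintro ψ ⟨hψ, c', δ', hδ', hc'⟩ s t h0 hst htT x
  refine hφ.eq_of_close hμ.a_gt_one hL (lt_min hδ hδ') hψ (K := c' + c) ?_ hlip h0 hst htT x
  intro s t h0 hst htT hd x
  have h1 := hc s t h0 hst htT (hd.trans (min_le_left _ _)) x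
  have h2 := hc' s t h0 hst htT (hd.trans (min_le_right _ _)) x
  have h3 := norm_sub_le_norm_sub_add_norm_sub (ψ t s x) (μ t s x) (φ t s x)
  rw [norm_sub_rev (μ t s x)] at h3
  linarith
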